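/- Let f : B → A be a homomorphism of commutative rings. Then f is pure as a morphism of B-modules if and only if for every B-module N the unit map η_N : N → (N ⊗_B A)^co, η_N(n) = n ⊗ 1, is bijective, where (N ⊗_B A)^co = {q ∈ N ⊗_B A : (the image of q under n⊗a ↦ n⊗1⊗a) = (the image of q under n⊗a ↦ n⊗a⊗1) in N ⊗_B A ⊗_B A}. (In other words, the comparison functor to comodules over the canonical coring is fully faithful if and only if f is pure.) -/

import Mathlib

open TensorProduct

universe u

/-- The map `n ↦ n ⊗ 1`. -/
noncomputable def unitMap (B A : Type u) [CommRing B] [CommRing A] [Algebra B A]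
    (N : Type u) [AddCommGroup N] [Module B N] : N →ₗ[B] N ⊗[B] A :=
  (TensorProduct.mk B N A).flip 1

/-- The map `n ⊗ a ↦ (n ⊗ 1) ⊗ a`. -/
noncomputable def coactMap (B A : Type u) [CommRing B] [CommRing A] [Algebra B A]
    (N : Type u) [AddCommGroup N] [Module B N] :
    N ⊗[B] A →ₗ[B] (N ⊗[B] A) ⊗[B] A :=
  LinearMap.rTensor A (unitMap B A N)

/-- The map `n ⊗ a ↦ (n ⊗ a) ⊗ 1`. -/
noncomputable def insMap (B A : Type u) [CommRing B] [CommRing A] [Algebra B A]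
    (N : Type u) [AddCommGroup N] [Module B N] :
    N ⊗[B] A →ₗ[B] (N ⊗[B] A) ⊗[B] A :=
  unitMap B A (N ⊗[B] A)

theorem rTensor_unitMap (B A : Type u) [CommRing B] [CommRing A] [Algebra B A]
    (M Q : Type u) [AddCommGroup M] [Module B M] [AddCommGroup Q] [Module B Q]
    (g : M →ₗ[B] Q) (m : M) :
    LinearMap.rTensor A g (unitMap B A M m) = unitMap B A Q (g m) := by
  simp [unitMap]

/-- `f : B → A` is pure as a morphism of `B`-modules iff for every `B`-module `N` the unit
map `η_N : N → (N ⊗_B A)^co`, `n ↦ n ⊗ 1`, is bijective (it is always well defined, so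
bijectivity onto the coinvariants means: injective with range equal to the coinvariants). -/
theorem pure_iff_unit_bijective (B A : Type u) [CommRing B] [CommRing A] [Algebra B A] :
    (∀ (N : Type u) [AddCommGroup N] [Module B N],
      Function.Injective (unitMap B A N)) ↔
    (∀ (N : Type u) [AddCommGroup N] [Module B N],
      Function.Injective (unitMap B A N) ∧
      Set.range (unitMap B A N) =
        {q : N ⊗[B] A | coactMap B A N q = insMap B A N q}) := by
  constructor
  · intro h N _ _
    refine ⟨h N, ?_⟩
    ext q
    constructor
    · rintro ⟨n, rfl⟩
      simp [coactMap, insMap, unitMap]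
    · intro hq
      have hq' : coactMap B A N q = insMap B A N q := hq
      have h1 := congrArg
        (LinearMap.rTensor A (LinearMap.range (unitMap B A N)).mkQ) hq'
      have h2 : LinearMap.rTensor A (LinearMap.range (unitMap B A N)).mkQ
          (coactMap B A N q) = 0 := by
        unfold coactMap
        rw [← LinearMap.comp_apply, ← LinearMap.rTensor_comp, LinearMap.range_mkQ_comp,
          LinearMap.rTensor_zero, LinearMap.zero_apply]
      have h3 : LinearMap.rTensor A (LinearMap.range (unitMap B A N)).mkQ
          (insMap B A N q) =
          unitMap B A _ ((LinearMap.range (unitMap B A N)).mkQ q) := by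
        exact rTensor_unitMap B A _ _ _ q
      rw [h2, h3] at h1
      have h4 : (LinearMap.range (unitMap B A N)).mkQ q = 0 :=
        h _ (by rw [← h1, map_zero])
      rw [Submodule.mkQ_apply, Submodule.Quotient.mk_eq_zero] at h4
      exact h4
  · intro h N _ _
    exact (h N).1
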